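/- Let P be a flag 3-polytope with p_4 ≤ 2. If a 4-belt of P borders a 4-loop L_4, then the four facets of L_4 are pairwise different. -/

import Mathlib

open Set

noncomputable section

/-- The ambient space `ℝ³`. -/
abbrev E3 := EuclideanSpace ℝ (Fin 3)

/-- The cyclic successor in `Fin k`. -/
def nxt {k : ℕ} (i : Fin k) : Fin k := ⟨(i.1 + 1) % k, Nat.mod_lt _ i.pos⟩

/-- The cyclic predecessor in `Fin k`. -/
def prv {k : ℕ} (i : Fin k) : Fin k := ⟨(i.1 + (k - 1)) % k, Nat.mod_lt _ i.pos⟩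

/-- A convex polytope in `ℝ³`: the convex hull of a finite set of points. -/
def IsPolytope (P : Set E3) : Prop := ∃ V : Finset E3, P = convexHull ℝ (V : Set E3)

/-- The dimension of a subset of `ℝ³` (the dimension of its affine hull). -/
def setDim (A : Set E3) : ℕ := Module.finrank ℝ ↥(vectorSpan ℝ A)

/-- A face of a polytope: a nonempty closed convex extreme subset. -/
def IsFaceOf (F P : Set E3) : Prop :=
  F.Nonempty ∧ IsClosed F ∧ Convex ℝ F ∧ IsExtreme ℝ P F

/-- A facet: a `2`-dimensional face. -/
def IsFacetOf (F P : Set E3) : Prop := IsFaceOf F P ∧ setDim F = 2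

/-- An edge: a `1`-dimensional face. -/
def IsEdgeOf (F P : Set E3) : Prop := IsFaceOf F P ∧ setDim F = 1

/-- A vertex: a point whose singleton is a face. -/
def IsVertexOf (v : E3) (P : Set E3) : Prop := IsFaceOf {v} P

/-- The set of facets of `P`. -/
def facets (P : Set E3) : Set (Set E3) := {F | IsFacetOf F P}

/-- A simple 3-polytope: a 3-dimensional convex polytope each of whose vertices
is contained in exactly 3 facets. -/
def IsSimplePolytope3 (P : Set E3) : Prop :=
  IsPolytope P ∧ setDim P = 3 ∧
    ∀ v : E3, IsVertexOf v P → {F | IsFacetOf F P ∧ v ∈ F}.ncard = 3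

/-- The number of edges of a facet `F` of `P`. -/
def facetEdges (P F : Set E3) : ℕ := {e | IsEdgeOf e P ∧ e ⊆ F}.ncard

/-- `pVec P k` is the number of `k`-gonal facets of `P`. -/
def pVec (P : Set E3) (k : ℕ) : ℕ := {F | IsFacetOf F P ∧ facetEdges P F = k}.ncard

/-- A (mathematical) fullerene: a simple 3-polytope with all facets pentagons
and hexagons. -/
def IsFullerene (P : Set E3) : Prop :=
  IsSimplePolytope3 P ∧ ∀ F, IsFacetOf F P → facetEdges P F = 5 ∨ facetEdges P F = 6

/-- A `k`-loop in `P` (`k ≥ 2`): a cyclic sequence of facets in which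
(cyclically) consecutive facets intersect in an edge; a `1`-loop is a single facet. -/
def IsLoop (P : Set E3) {k : ℕ} (L : Fin k → Set E3) : Prop :=
  0 < k ∧ (∀ i, IsFacetOf (L i) P) ∧ (2 ≤ k → ∀ i, IsEdgeOf (L i ∩ L (nxt i)) P)

/-- A simple loop: a loop with pairwise different facets. -/
def IsSimpleLoop (P : Set E3) {k : ℕ} (L : Fin k → Set E3) : Prop :=
  IsLoop P L ∧ Function.Injective L

/-- A `k`-belt (`k ≥ 3`): a `k`-loop such that for `k = 3` the three facets have empty
total intersection, and for `k ≥ 4` two facets intersect iff they are cyclically successive. -/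
def IsBelt (P : Set E3) {k : ℕ} (L : Fin k → Set E3) : Prop :=
  3 ≤ k ∧ IsLoop P L ∧
    (k = 3 → ∀ i, L i ∩ L (nxt i) ∩ L (nxt (nxt i)) = ∅) ∧
    (4 ≤ k → ∀ p q, p ≠ q → ((L p ∩ L q).Nonempty ↔ q = nxt p ∨ p = nxt q))

/-- A flag 3-polytope: a simple 3-polytope different from the tetrahedron
(i.e. not having exactly 4 facets) without 3-belts. -/
def IsFlag3Polytope (P : Set E3) : Prop :=
  IsSimplePolytope3 P ∧ (facets P).ncard ≠ 4 ∧ ∀ B : Fin 3 → Set E3, ¬ IsBelt P B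

/-- `γ` is the simple edge-cycle of `P` traced by the cyclically ordered distinct
vertices `v 0, …, v (n-1)` (`n ≥ 3`), consecutive ones joined by edges of `P`. -/
def IsSimpleEdgeCycleVia (P γ : Set E3) {n : ℕ} (v : Fin n → E3) : Prop :=
  3 ≤ n ∧ Function.Injective v ∧ (∀ i, IsVertexOf (v i) P) ∧
    (∀ i, IsEdgeOf (segment ℝ (v i) (v (nxt i))) P) ∧
    γ = ⋃ i, segment ℝ (v i) (v (nxt i))

/-- A simple edge-cycle in the graph of `P`. -/
def IsSimpleEdgeCycle (P γ : Set E3) : Prop :=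
  ∃ (n : ℕ) (v : Fin n → E3), IsSimpleEdgeCycleVia P γ v

/-- `C` is a connected component of the set `A`. -/
def IsCompOf (C A : Set E3) : Prop := ∃ x ∈ A, C = connectedComponentIn A x

/-- The loop `L` is obtained by walking round the simple edge-cycle `γ` inside the
connected component `C` of `∂P ∖ γ`: the facets of `L` lie on the side `C`, and the
edges of `γ`, in cyclic order, lie in the facets of `L` in cyclic order (the loop
index advancing exactly when the facet changes, and making exactly one turn). -/
def WalksRound (P γ C : Set E3) {k : ℕ} (L : Fin k → Set E3) : Prop :=
  IsLoop P L ∧ (∀ i, intrinsicInterior ℝ (L i) ⊆ C) ∧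
    ∃ (n : ℕ) (v : Fin n → E3) (φ : Fin n → Fin k),
      IsSimpleEdgeCycleVia P γ v ∧
      (∀ i, segment ℝ (v i) (v (nxt i)) ⊆ L (φ i)) ∧
      (∀ i, φ (nxt i) = φ i ∨ φ (nxt i) = nxt (φ i)) ∧
      Function.Surjective φ ∧
      (2 ≤ k → (Finset.univ.filter (fun i : Fin n => φ (nxt i) ≠ φ i)).card = k)

/-- Two loops border each other: they are obtained by walking round the same simple
edge-cycle `γ` in the two different connected components of `∂P ∖ γ`. -/
def Borders (P : Set E3) {k₁ k₂ : ℕ} (L₁ : Fin k₁ → Set E3) (L₂ : Fin k₂ → Set E3) : Prop :=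
  ∃ γ C₁ C₂ : Set E3, IsCompOf C₁ (frontier P \ γ) ∧ IsCompOf C₂ (frontier P \ γ) ∧
    C₁ ≠ C₂ ∧ WalksRound P γ C₁ L₁ ∧ WalksRound P γ C₂ L₂

/-- A loop surrounds the facet `F` if it borders the `1`-loop `(F)`. -/
def Surrounds (P : Set E3) {k : ℕ} (L : Fin k → Set E3) (F : Set E3) : Prop :=
  IsFacetOf F P ∧ Borders P L (fun _ : Fin 1 => F)

/-- The number of edges of `P` lying in the facet `F` and in the set `γ`. -/
def edgesInCommon (P F γ : Set E3) : ℕ := {e | IsEdgeOf e P ∧ e ⊆ F ∧ e ⊆ γ}.ncard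
/-- A simple 3-polytope all of whose facets are pentagons and hexagons except for
at most one exceptional facet, which is a quadrangle or a heptagon. -/
def IsAlmostFullerene (P : Set E3) : Prop :=
  IsSimplePolytope3 P ∧
    (∀ F, IsFacetOf F P → facetEdges P F ∈ ({4, 5, 6, 7} : Set ℕ)) ∧
    {F | IsFacetOf F P ∧ (facetEdges P F = 4 ∨ facetEdges P F = 7)}.ncard ≤ 1

/-- The (combinatorial) dodecahedron: a simple 3-polytope with all facets pentagons. -/
def IsDodecahedron (P : Set E3) : Prop :=
  IsSimplePolytope3 P ∧ ∀ F, IsFacetOf F P → facetEdges P F = 5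

/-- `e` and `e'` are opposite edges of the hexagonal facet `H`: they are disjoint and no
edge of `H` meets both of them. -/
def OppositeEdges (P H e e' : Set E3) : Prop :=
  IsEdgeOf e P ∧ IsEdgeOf e' P ∧ e ⊆ H ∧ e' ⊆ H ∧ e ∩ e' = ∅ ∧
    ∀ e'', IsEdgeOf e'' P → e'' ⊆ H → (e'' ∩ e).Nonempty → e'' ≠ e → e'' ∩ e' = ∅

/-- A cap: a pentagonal facet `F₀` together with a surrounding 5-belt of pentagons. -/
def IsCapOf (P F₀ : Set E3) (L : Fin 5 → Set E3) : Prop :=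
  IsFacetOf F₀ P ∧ facetEdges P F₀ = 5 ∧ (∀ i, facetEdges P (L i) = 5) ∧
    IsBelt P L ∧ Surrounds P L F₀

/-- The number of 5-belts of `P` (counted as sets of facets). -/
def fiveBeltCount (P : Set E3) : ℕ :=
  {S : Set (Set E3) | ∃ B : Fin 5 → Set E3, IsBelt P B ∧ S = Set.range B}.ncard

/-- The structure of the `k`-th fullerene of Family I: two caps separated by `k`
hexagonal 5-belts, each bordering the next (for `k = 0` the caps border each other,
giving the dodecahedron). -/
def FamilyI (P : Set E3) (k : ℕ) : Prop :=
  ∃ (F₀ F₀' : Set E3) (L L' : Fin 5 → Set E3) (B : ℕ → Fin 5 → Set E3),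
    IsCapOf P F₀ L ∧ IsCapOf P F₀' L' ∧
    (∀ i < k, IsBelt P (B i) ∧ ∀ j, facetEdges P (B i j) = 6) ∧
    (∀ i, i + 1 < k → Borders P (B i) (B (i + 1))) ∧
    (0 < k → Borders P L (B 0) ∧ Borders P (B (k - 1)) L') ∧
    (k = 0 → Borders P L L') ∧
    facets P = {F₀, F₀'} ∪ Set.range L ∪ Set.range L' ∪ ⋃ i ∈ Set.Iio k, Set.range (B i)

/-- `P` is obtained from `Q` by an `(s,k;t₀,t₁)`-truncation with new edge `Enew`:
`P` is cut off from `Q` by a halfspace `{f ≤ c}` whose boundary plane crosses exactly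
two edges `E₀ ≠ E₁` of a `k`-gonal facet `F` of `Q`, cutting off exactly `s` vertices,
all belonging to `F`; `G₀` and `G₁` are the facets meeting `F` along `E₀` and `E₁`, and
they are `t₀`- and `t₁`-gons; `Enew` is the new edge dividing `F`. -/
def IsTruncation (s k t₀ t₁ : ℕ) (Q P Enew : Set E3) : Prop :=
  IsSimplePolytope3 Q ∧ IsSimplePolytope3 P ∧
    ∃ (F E₀ E₁ G₀ G₁ : Set E3) (f : E3 →ₗ[ℝ] ℝ) (c : ℝ),
      IsFacetOf F Q ∧ facetEdges Q F = k ∧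
      IsEdgeOf E₀ Q ∧ IsEdgeOf E₁ Q ∧ E₀ ≠ E₁ ∧ E₀ ⊆ F ∧ E₁ ⊆ F ∧
      IsFacetOf G₀ Q ∧ IsFacetOf G₁ Q ∧ G₀ ≠ F ∧ G₁ ≠ F ∧ E₀ ⊆ G₀ ∧ E₁ ⊆ G₁ ∧
      facetEdges Q G₀ = t₀ ∧ facetEdges Q G₁ = t₁ ∧
      P = Q ∩ {x | f x ≤ c} ∧
      (∀ e, IsEdgeOf e Q → (∃ x ∈ e, c < f x) → (∃ x ∈ e, f x < c) → e = E₀ ∨ e = E₁) ∧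
      (∃ x ∈ E₀, c < f x) ∧ (∃ x ∈ E₀, f x < c) ∧
      (∃ x ∈ E₁, c < f x) ∧ (∃ x ∈ E₁, f x < c) ∧
      (∀ v, IsVertexOf v Q → f v ≠ c) ∧
      {v | IsVertexOf v Q ∧ c < f v}.ncard = s ∧
      (∀ v, IsVertexOf v Q → c < f v → v ∈ F) ∧
      Enew = F ∩ {x | f x = c}

/-- Combinatorial equivalence of polytopes: an inclusion-preserving bijection
between the sets of faces. -/
def CombEquiv (P Q : Set E3) : Prop :=
  ∃ φ : {A : Set E3 // IsFaceOf A P} ≃ {A : Set E3 // IsFaceOf A Q},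
    ∀ A B : {A : Set E3 // IsFaceOf A P}, A.1 ⊆ B.1 ↔ (φ A).1 ⊆ (φ B).1

/-- Combinatorial equivalence sending the face `Ep` of `P` to the face `Eq` of `Q`. -/
def CombEquivMapping (P Q Ep Eq : Set E3) : Prop :=
  ∃ φ : {A : Set E3 // IsFaceOf A P} ≃ {A : Set E3 // IsFaceOf A Q},
    (∀ A B : {A : Set E3 // IsFaceOf A P}, A.1 ⊆ B.1 ↔ (φ A).1 ⊆ (φ B).1) ∧
    ∀ h : IsFaceOf Ep P, ((φ ⟨Ep, h⟩) : {A : Set E3 // IsFaceOf A Q}).1 = Eq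

/-- The straightening of `P` along the edge `E` is defined: `P` is combinatorially
obtained from some simple 3-polytope `Q` by an `(s,k)`-truncation whose new edge
corresponds to `E`. -/
def StraighteningDefined (P E : Set E3) : Prop :=
  ∃ (s k t₀ t₁ : ℕ) (Q P₁ E₁ : Set E3),
    IsTruncation s k t₀ t₁ Q P₁ E₁ ∧ CombEquivMapping P P₁ E E₁

/-- `P` is obtained from `Q` by one of the truncations
`(1;4,5)`, `(1;5,5)`, `(2,6;4,5)`, `(2,6;5,5)`, `(2,6;5,6)`, `(2,7;5,5)`, `(2,7;5,6)`. -/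
def FullereneStep (Q P : Set E3) : Prop :=
  ∃ (s k t₀ t₁ : ℕ) (Enew : Set E3), IsTruncation s k t₀ t₁ Q P Enew ∧
    ((s = 1 ∧ (({t₀, t₁} : Finset ℕ) = {4, 5} ∨ ({t₀, t₁} : Finset ℕ) = {5, 5})) ∨
     (s = 2 ∧ k = 6 ∧ (({t₀, t₁} : Finset ℕ) = {4, 5} ∨ ({t₀, t₁} : Finset ℕ) = {5, 5} ∨
        ({t₀, t₁} : Finset ℕ) = {5, 6})) ∨
     (s = 2 ∧ k = 7 ∧ (({t₀, t₁} : Finset ℕ) = {5, 5} ∨ ({t₀, t₁} : Finset ℕ) = {5, 6})))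

/-!
Suppose that the loop `L` bordering the belt `B` along `γ` repeats a facet, `L d = L (d + 2)`.
Since `P` is simple, at a vertex of `γ` exactly one of the two loops passes to its next facet.
Hence the arcs along which the facets of `L` follow `γ` have at most four interior vertices in
total, one for each turn of `B`.

If the arc of `L (d + 1)` consisted of one or two edges, then two consecutive facets of `B`, each
sharing an edge with `L d`, would meet at a vertex of that arc; as there are no 3-belts, `L d`
would contain this vertex too, which would then lie in four facets. So the arcs of `L (d + 1)` and
`L (d + 3)` have at least two interior vertices each. By the count they have exactly two, and the
arcs of `L d` and `L (d + 2)` are single edges.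

As `L d = L (d + 2)`, the edges `L d ∩ L (d + 1)` and `L d ∩ L (d + 3)` join the ends of the two
long arcs. Each of them closes its arc up to a quadrangle, and together with the two single edges
they bound the quadrangle `L d`. These are three different quadrangles, so `p₄ ≥ 3`.
-/

/-! ### Extreme subsets of convex sets -/

section Extreme

variable {E : Type*} [NormedAddCommGroup E] [NormedSpace ℝ E]

theorem exists_mem_openSegment_of_mem_intrinsicInterior {A : Set E} {x z : E}
    (hx : x ∈ intrinsicInterior ℝ A) (hz : z ∈ affineSpan ℝ A) :
    ∃ y ∈ A, x ∈ openSegment ℝ z y := by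
  obtain ⟨x, hxA, rfl⟩ := mem_intrinsicInterior.1 hx
  have : Nonempty (affineSpan ℝ A) := ⟨x⟩
  have hcont : Continuous fun t : ℝ ↦ AffineMap.lineMap x (⟨z, hz⟩ : affineSpan ℝ A) (-t) :=
    AffineMap.lineMap_continuous.comp continuous_neg
  have hmem : ∀ᶠ t in nhds (0 : ℝ),
      (AffineMap.lineMap x (⟨z, hz⟩ : affineSpan ℝ A) (-t) : E) ∈ A :=
    hcont.continuousAt (by simpa using mem_interior_iff_mem_nhds.1 hxA :
      (↑) ⁻¹' A ∈ nhds (AffineMap.lineMap x (⟨z, hz⟩ : affineSpan ℝ A) (-(0 : ℝ))))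
  obtain ⟨ε, hε, hball⟩ := Metric.eventually_nhds_iff.1 hmem
  refine ⟨_, hball (y := ε / 2) ?_, (ε / 2) / (1 + ε / 2), 1 / (1 + ε / 2), by positivity,
    by positivity, by field_simp; ring, ?_⟩
  · rw [dist_zero_right, Real.norm_eq_abs, abs_of_pos (half_pos hε)]
    exact half_lt_self hε
  · have : (1 + ε / 2) ≠ 0 := by positivity
    rw [AffineMap.lineMap_apply]
    simp only [AffineSubspace.coe_vadd, Submodule.coe_smul, AffineSubspace.coe_vsub, vsub_eq_sub,
      vadd_eq_add]
    match_scalars <;> field_simp <;> ring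

theorem eq_of_isExtreme_of_finrank_vectorSpan_eq [FiniteDimensional ℝ E] {S A : Set E}
    (hA : Convex ℝ A) (hne : A.Nonempty) (hext : IsExtreme ℝ S A)
    (hdim : Module.finrank ℝ (vectorSpan ℝ A) = Module.finrank ℝ (vectorSpan ℝ S)) : A = S := by
  refine hext.subset.antisymm fun z hz ↦ ?_
  obtain ⟨x, hx⟩ := (intrinsicInterior_nonempty hA).2 hne
  have hspan : affineSpan ℝ A = affineSpan ℝ S := by
    refine AffineSubspace.eq_of_direction_eq_of_nonempty_of_le ?_
      ((affineSpan_nonempty ℝ).2 hne) (affineSpan_mono ℝ hext.subset)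
    simpa only [direction_affineSpan] using
      Submodule.eq_of_le_of_finrank_eq (vectorSpan_mono ℝ hext.subset) hdim
  obtain ⟨y, hy, hxy⟩ := exists_mem_openSegment_of_mem_intrinsicInterior hx
    (hspan ▸ mem_affineSpan ℝ hz)
  exact hext.left_mem_of_mem_openSegment hz (hext.subset hy) (intrinsicInterior_subset hx) hxy

theorem exists_levelSet_of_isExtreme [FiniteDimensional ℝ E] {K g : Set E} (hg : Convex ℝ g)
    (hne : g.Nonempty) (hext : IsExtreme ℝ K g) (hdim : Module.finrank ℝ (vectorSpan ℝ K) =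
      Module.finrank ℝ (vectorSpan ℝ g) + 1) :
    ∃ (f : E →ₗ[ℝ] ℝ) (c : ℝ), ∀ y ∈ K, f y = c ↔ y ∈ g := by
  obtain ⟨m, hm⟩ := hne
  obtain ⟨z, hz, hzg⟩ : ∃ z ∈ K, z - m ∉ vectorSpan ℝ g := by
    by_contra! hcon
    have hle : vectorSpan ℝ K ≤ vectorSpan ℝ g := by
      rw [vectorSpan_eq_span_vsub_set_right ℝ (hext.subset hm), Submodule.span_le]
      rintro _ ⟨z, hz, rfl⟩
      exact hcon z hz
    have := Submodule.finrank_mono hle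
    omega
  obtain ⟨f, hfz, hfg⟩ := Submodule.exists_le_ker_of_notMem hzg
  set H := K ∩ {y | f y = f m}
  have hgH : g ⊆ H := fun y hy ↦
    ⟨hext.subset hy, sub_eq_zero.1 <|
      (map_sub f y m).symm.trans <| hfg <| vsub_mem_vectorSpan ℝ hy hm⟩
  have hHker : vectorSpan ℝ H ≤ LinearMap.ker f := by
    rw [vectorSpan_eq_span_vsub_set_right ℝ (hgH hm), Submodule.span_le]
    rintro _ ⟨y, hy, rfl⟩
    simpa [sub_eq_zero] using hy.2
  have hlt : vectorSpan ℝ H < vectorSpan ℝ K :=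
    (vectorSpan_mono ℝ inter_subset_left).lt_of_ne fun heq ↦
      hfz (hHker (heq ▸ vsub_mem_vectorSpan ℝ hz (hext.subset hm)))
  have hgH' : g = H := by
    refine eq_of_isExtreme_of_finrank_vectorSpan_eq hg ⟨m, hm⟩
      (hext.mono inter_subset_left hgH) ?_
    have := Submodule.finrank_lt_finrank_of_lt hlt
    have := Submodule.finrank_mono (vectorSpan_mono ℝ hgH)
    omega
  exact ⟨f, f m, fun y hy ↦ ⟨fun h ↦ hgH' ▸ ⟨hy, h⟩, fun h ↦ (hgH h).2⟩⟩

theorem exists_exposing_functional_of_isExtreme [FiniteDimensional ℝ E] {K g : Set E}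
    (hK : Convex ℝ K) (hg : Convex ℝ g) (hne : g.Nonempty) (hext : IsExtreme ℝ K g)
    (hdim : Module.finrank ℝ (vectorSpan ℝ K) = Module.finrank ℝ (vectorSpan ℝ g) + 1) :
    ∃ (f : E →ₗ[ℝ] ℝ) (c : ℝ), (∀ y ∈ K, f y ≤ c) ∧ ∀ y ∈ K, f y = c ↔ y ∈ g := by
  obtain ⟨f, c, hf⟩ := exists_levelSet_of_isExtreme hg hne hext hdim
  by_cases hle : ∀ y ∈ K, f y ≤ c
  · exact ⟨f, c, hle, hf⟩
  push Not at hle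
  obtain ⟨z, hz, hzc⟩ := hle
  refine ⟨-f, -c, fun y hy ↦ neg_le_neg ?_, fun y hy ↦ neg_inj.trans (hf y hy)⟩
  by_contra! hyc
  -- `K \ g` is convex because `g` is extreme, so `f - c` cannot change sign on it.
  have hconn : (f '' (K \ g)).OrdConnected :=
    ((hext.convex_sdiff hK).linear_image f).ordConnected
  obtain ⟨x, hx, hxc⟩ := hconn.out
    (mem_image_of_mem f ⟨hy, fun h ↦ hyc.ne ((hf y hy).2 h)⟩)
    (mem_image_of_mem f ⟨hz, fun h ↦ hzc.ne ((hf z hz).2 h).symm⟩) ⟨hyc.le, hzc.le⟩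
  exact hx.2 ((hf x hx.1).1 hxc)

end Extreme

/-! ### Faces of polytopes -/

theorem setDim_mono {A B : Set E3} (h : A ⊆ B) : setDim A ≤ setDim B :=
  Submodule.finrank_mono (vectorSpan_mono ℝ h)

section Faces

variable {P F G e e' : Set E3} {a b x : E3}

theorem IsFaceOf.subset (hF : IsFaceOf F P) : F ⊆ P := hF.2.2.2.subset

theorem IsFaceOf.convex (hF : IsFaceOf F P) : Convex ℝ F := hF.2.2.1

theorem IsFaceOf.inter (hF : IsFaceOf F P) (hG : IsFaceOf G P) (hne : (F ∩ G).Nonempty) :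
    IsFaceOf (F ∩ G) P :=
  ⟨hne, hF.2.1.inter hG.2.1, hF.convex.inter hG.convex, hF.2.2.2.inter hG.2.2.2⟩

theorem IsFaceOf.eq_of_subset_of_setDim_le (hF : IsFaceOf F P) (hG : IsFaceOf G P) (hFG : F ⊆ G)
    (hdim : setDim G ≤ setDim F) : F = G :=
  eq_of_isExtreme_of_finrank_vectorSpan_eq hF.convex hF.1 (hF.2.2.2.mono hG.subset hFG)
    ((setDim_mono hFG).antisymm hdim)

theorem IsFaceOf.setDim_inter_lt (hF : IsFaceOf F P) (hG : IsFaceOf G P) (hne : F ≠ G)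
    (hdim : setDim F = setDim G) (hFG : (F ∩ G).Nonempty) : setDim (F ∩ G) < setDim F := by
  by_contra! h
  exact hne (((hF.inter hG hFG).eq_of_subset_of_setDim_le hF inter_subset_left h).symm.trans
    ((hF.inter hG hFG).eq_of_subset_of_setDim_le hG inter_subset_right (hdim ▸ h)))

theorem IsFacetOf.inter_eq_of_edge_subset (hF : IsFacetOf F P) (hG : IsFacetOf G P) (hne : F ≠ G)
    (he : IsEdgeOf e P) (heF : e ⊆ F) (heG : e ⊆ G) : F ∩ G = e := by
  have hsub : e ⊆ F ∩ G := subset_inter heF heG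
  have hlt := hF.1.setDim_inter_lt hG.1 hne (hF.2.trans hG.2.symm) (he.1.1.mono hsub)
  exact (he.1.eq_of_subset_of_setDim_le (hF.1.inter hG.1 (he.1.1.mono hsub)) hsub
    (by rw [he.2]; rw [hF.2] at hlt; omega)).symm

theorem IsEdgeOf.eq_of_subset_facets (he : IsEdgeOf e P) (he' : IsEdgeOf e' P)
    (hF : IsFacetOf F P) (hG : IsFacetOf G P) (hne : F ≠ G) (heF : e ⊆ F) (heG : e ⊆ G)
    (heF' : e' ⊆ F) (heG' : e' ⊆ G) : e = e' :=
  (hF.inter_eq_of_edge_subset hG hne he heF heG).symm.trans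
    (hF.inter_eq_of_edge_subset hG hne he' heF' heG')

theorem IsEdgeOf.inter_subsingleton (he : IsEdgeOf e P) (he' : IsEdgeOf e' P) (hne : e ≠ e') :
    (e ∩ e').Subsingleton := by
  rcases (e ∩ e').eq_empty_or_nonempty with h | h
  · exact h ▸ subsingleton_empty
  · have hlt := he.1.setDim_inter_lt he'.1 hne (he.2.trans he'.2.symm) h
    rw [he.2, Nat.lt_one_iff] at hlt
    exact (vectorSpan_eq_bot_iff_subsingleton ℝ).1 (Submodule.finrank_eq_zero.1 hlt)

theorem IsEdgeOf.isVertexOf (he : IsEdgeOf e P) (he' : IsEdgeOf e' P) (hne : e ≠ e')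
    (hx : x ∈ e) (hx' : x ∈ e') : IsVertexOf x P := by
  have hface := he.1.inter he'.1 ⟨x, hx, hx'⟩
  rwa [(he.inter_subsingleton he' hne).eq_singleton_of_mem ⟨hx, hx'⟩] at hface

theorem IsEdgeOf.infinite (he : IsEdgeOf e P) : e.Infinite := by
  refine he.1.convex.isPreconnected.infinite_of_nontrivial (not_subsingleton_iff.1 fun hs ↦ ?_)
  have hdim := he.2
  rw [setDim, (vectorSpan_eq_bot_iff_subsingleton ℝ).2 hs, finrank_bot] at hdim
  exact zero_ne_one hdim

theorem IsVertexOf.mem (hx : IsVertexOf x P) : x ∈ P := hx.subset rfl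

theorem IsVertexOf.eq_or_eq_of_mem_segment (hx : IsVertexOf x P) (ha : a ∈ P) (hb : b ∈ P)
    (hxab : x ∈ segment ℝ a b) : x = a ∨ x = b := by
  rw [← insert_endpoints_openSegment] at hxab
  rcases hxab with rfl | rfl | hopen
  · exact .inl rfl
  · exact .inr rfl
  · exact .inl (hx.2.2.2.left_mem_of_mem_openSegment ha hb rfl hopen).symm

theorem IsEdgeOf.eq_segment (he : IsEdgeOf e P) (ha : IsVertexOf a P) (hb : IsVertexOf b P)
    (hab : a ≠ b) (hae : a ∈ e) (hbe : b ∈ e) : e = segment ℝ a b := by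
  refine Subset.antisymm (fun z hz ↦ ?_) (he.1.convex.segment_subset hae hbe)
  have hcol : Collinear ℝ {a, z, b} := (collinear_iff_finrank_le_one.2 he.2.le).subset <| by
    rintro y (rfl | rfl | rfl) <;> assumption
  have hzP := he.1.subset hz
  rcases hcol.wbtw_or_wbtw_or_wbtw with h | h | h
  · exact h.mem_segment
  · rcases hb.eq_or_eq_of_mem_segment hzP ha.mem h.mem_segment with rfl | rfl
    · exact right_mem_segment ℝ a b
    · exact absurd rfl hab
  · rcases ha.eq_or_eq_of_mem_segment hb.mem hzP h.mem_segment with rfl | rfl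
    · exact absurd rfl hab
    · exact left_mem_segment ℝ a b

theorem IsPolytope.finite_faces (hP : IsPolytope P) : {F | IsFaceOf F P}.Finite := by
  obtain ⟨V, rfl⟩ := hP
  have hmaps :
      MapsTo (extremePoints ℝ (E := E3)) {F | IsFaceOf F (convexHull ℝ (V : Set E3))} (𝒫 V) :=
    fun F hF ↦ hF.2.2.2.extremePoints_subset_extremePoints.trans extremePoints_convexHull_subset
  have hhull {F : Set E3} (hF : IsFaceOf F (convexHull ℝ (V : Set E3))) :
      closure (convexHull ℝ (extremePoints ℝ F)) = F :=
    closure_convexHull_extremePoints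
      ((V.finite_toSet.isCompact_convexHull ℝ).of_isClosed_subset hF.2.1 hF.subset) hF.convex
  exact .of_injOn hmaps (fun F hF G hG h ↦ by rw [← hhull hF, h, hhull hG])
    V.finite_toSet.finite_subsets

end Faces

/-! ### Cyclic sequences -/

section Cyclic

variable {n k : ℕ}

theorem nxt_iterate_val (i : Fin n) (m : ℕ) : (nxt^[m] i).1 = (i.1 + m) % n := by
  induction m with
  | zero => exact (Nat.mod_eq_of_lt i.2).symm
  | succ m ih => simp only [Function.iterate_succ_apply', nxt, ih, Nat.mod_add_mod, add_assoc]

theorem nxt_iterate_ne {m : ℕ} (hm : 0 < m) (hmn : m < n) (i : Fin n) : nxt^[m] i ≠ i := by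
  intro h
  have hmod : i.1 + m ≡ i.1 + 0 [MOD n] := by
    rw [Nat.ModEq, ← nxt_iterate_val, h, add_zero, Nat.mod_eq_of_lt i.2]
  exact hm.ne' ((Nat.ModEq.add_left_cancel' _ hmod).eq_of_lt_of_lt hmn (hm.trans hmn))

theorem nxt_ne (hn : 2 ≤ n) (i : Fin n) : nxt i ≠ i := nxt_iterate_ne one_pos hn i

theorem nxt_nxt_ne (hn : 3 ≤ n) (i : Fin n) : nxt (nxt i) ≠ i := nxt_iterate_ne two_pos hn i

theorem forall_of_nxt {p : Fin n → Prop} {i : Fin n} (hi : p i) (hp : ∀ j, p j → p (nxt j))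
    (j : Fin n) : p j := by
  have hj : nxt^[n - i.1 + j.1] i = j := by
    ext
    rw [nxt_iterate_val, ← add_assoc, Nat.add_sub_cancel' i.2.le, Nat.add_mod_left,
      Nat.mod_eq_of_lt j.2]
  exact hj ▸ Function.Iterate.rec p hi hp _

theorem nxt_surjective : Function.Surjective (nxt : Fin n → Fin n) := fun i ↦
  forall_of_nxt (p := fun j ↦ ∃ l, nxt l = j) ⟨i, rfl⟩ (fun j _ ↦ ⟨j, rfl⟩) i

theorem nxt_injective : Function.Injective (nxt : Fin n → Fin n) :=
  Finite.injective_iff_surjective.2 nxt_surjective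

theorem sym2_nxt_injective (hk : 3 ≤ k) : Function.Injective fun a : Fin k ↦ s(a, nxt a) := by
  intro a b h
  rcases Sym2.eq_iff.1 h with ⟨h, -⟩ | ⟨rfl, h⟩
  · exact h
  · exact absurd h (nxt_nxt_ne hk b)

theorem injective_vec_nxt (hn : 3 ≤ n) {i : Fin n} (hi : nxt (nxt (nxt i)) ≠ i) :
    Function.Injective ![i, nxt i, nxt (nxt i), nxt (nxt (nxt i))] := by
  have hstep (j : Fin n) : nxt j ≠ j := nxt_ne (by omega) j
  have hstep₂ (j : Fin n) : nxt (nxt j) ≠ j := nxt_nxt_ne hn j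
  intro a b hab
  fin_cases a <;> fin_cases b <;> simp_all [(hstep _).symm, (hstep₂ _).symm, hi.symm]

theorem nxt_four (i : Fin 4) : nxt (nxt (nxt (nxt i))) = i := by
  revert i
  decide

theorem eq_nxt_of_fin_four (i j : Fin 4) :
    j = i ∨ j = nxt i ∨ j = nxt (nxt i) ∨ j = nxt (nxt (nxt i)) := by
  revert i j
  decide

/-- A cyclic sequence `φ` of length `n` winding exactly once round `Fin k`: the indices with
value `d` form one arc, ending at `last d`, and the arc of `nxt d` follows it. -/
structure IsTurn (φ : Fin n → Fin k) (last : Fin k → Fin n) : Prop where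
  apply_last : ∀ d, φ (last d) = d
  apply_nxt_last : ∀ d, φ (nxt (last d)) = nxt d
  apply_nxt : ∀ i, i ≠ last (φ i) → φ (nxt i) = φ i

theorem exists_isTurn (hk : 2 ≤ k) {φ : Fin n → Fin k}
    (hstep : ∀ i, φ (nxt i) = φ i ∨ φ (nxt i) = nxt (φ i)) (hsurj : Function.Surjective φ)
    (hcard : (Finset.univ.filter fun i ↦ φ (nxt i) ≠ φ i).card = k) :
    ∃ last, IsTurn φ last := by
  have hlast : ∀ d, ∃ i, φ i = d ∧ φ (nxt i) = nxt d := by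
    intro d
    by_contra! hstay
    obtain ⟨i, hi⟩ := hsurj d
    obtain ⟨j, hj⟩ := hsurj (nxt d)
    have hconst := forall_of_nxt (p := fun i ↦ φ i = d) hi fun l hl ↦
      (hstep l).elim (·.trans hl) fun h ↦ absurd (hl ▸ h) (hstay l hl)
    exact nxt_ne hk d (hj.symm.trans (hconst j))
  choose last hφ hφ' using hlast
  have hinj : InjOn φ (Finset.univ.filter fun i ↦ φ (nxt i) ≠ φ i : Finset (Fin n)) :=
    Finset.injOn_of_surjOn_of_card_le φ (t := Finset.univ)
      (fun _ _ ↦ Finset.mem_coe.2 (Finset.mem_univ _))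
      (fun d _ ↦ ⟨last d, by simp [hφ, hφ', nxt_ne hk], hφ d⟩) (by simp [hcard])
  refine ⟨last, hφ, hφ', fun i hi ↦ not_not.1 fun hne ↦ hi (hinj ?_ ?_ (hφ (φ i)).symm)⟩
  · simpa using hne
  · simp [hφ, hφ', nxt_ne hk]

theorem IsTurn.last_eq_of_apply_nxt_ne {φ : Fin n → Fin k} {last : Fin k → Fin n}
    (h : IsTurn φ last) {i : Fin n} (hi : φ (nxt i) ≠ φ i) : i = last (φ i) :=
  not_not.1 fun hne ↦ hi (h.apply_nxt i hne)

theorem IsTurn.apply_nxt_of_ne {φ : Fin n → Fin k} {last : Fin k → Fin n} (h : IsTurn φ last)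
    {i : Fin n} {d : Fin k} (hi : φ i = d) (hne : i ≠ last d) : φ (nxt i) = d :=
  (h.apply_nxt i (hi ▸ hne)).trans hi

theorem IsTurn.arc_lengths_of_card_le {φ : Fin n → Fin 4} {last : Fin 4 → Fin n}
    (h : IsTurn φ last) (hn : 3 ≤ n) {d : Fin 4}
    (hcard : (Finset.univ.filter fun i ↦ i ≠ last (φ i)).card ≤ 4)
    (hlong : ∀ e, e = d ∨ e = nxt (nxt d) →
      nxt (last e) ≠ last (nxt e) ∧ nxt (nxt (last e)) ≠ last (nxt e)) :
    nxt (nxt (nxt (last d))) = last (nxt d) ∧ nxt (last (nxt d)) = last (nxt (nxt d)) := by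
  have hfirst (e) : φ (nxt (last e)) = nxt e := h.apply_nxt_last e
  have hsecond {e} (he : e = d ∨ e = nxt (nxt d)) : φ (nxt (nxt (last e))) = nxt e :=
    h.apply_nxt_of_ne (hfirst e) (hlong e he).1
  have hthird : φ (nxt (nxt (nxt (last d)))) = nxt d :=
    h.apply_nxt_of_ne (hsecond (.inl rfl)) (hlong d (.inl rfl)).2
  have hd : nxt d ≠ nxt (nxt (nxt d)) := (nxt_nxt_ne (by norm_num) _).symm
  have hstep (i : Fin n) : i ≠ nxt i := (nxt_ne (by omega) i).symm
  set A : Finset (Fin n) := {nxt (last d), nxt (nxt (last d))} with hA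
  set A' : Finset (Fin n) := {nxt (last (nxt (nxt d))), nxt (nxt (last (nxt (nxt d))))} with hA'
  have hφA : ∀ i ∈ A, φ i = nxt d := by simp [hA, hfirst, hsecond]
  have hφA' : ∀ i ∈ A', φ i = nxt (nxt (nxt d)) := by simp [hA', hfirst, hsecond]
  have hdisj : Disjoint A A' := Finset.disjoint_left.2 fun i hi hi' ↦
    hd ((hφA i hi).symm.trans (hφA' i hi'))
  have hinterior : A ∪ A' = Finset.univ.filter fun i ↦ i ≠ last (φ i) := by
    refine Finset.eq_of_subset_of_card_le (fun i hi ↦ ?_) ?_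
    · simp only [hA, hA', Finset.mem_union, Finset.mem_insert, Finset.mem_singleton] at hi
      rcases hi with (rfl | rfl) | rfl | rfl <;> simp [hfirst, hsecond, hlong]
    · rwa [Finset.card_union_of_disjoint hdisj, Finset.card_pair (hstep _),
        Finset.card_pair (hstep _)]
  have hlast {i} (hi : i ∉ A) (hi' : i ∉ A') : i = last (φ i) := by
    simpa [hi, hi'] using (Finset.ext_iff.1 hinterior i).not
  constructor
  · rw [← hthird]
    refine hlast (by simp [hA, nxt_nxt_ne hn, (hstep _).symm]) fun hmem ↦ ?_
    exact hd (hthird.symm.trans (hφA' _ hmem))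
  · rw [← hfirst (nxt d)]
    exact hlast (fun hmem ↦ nxt_ne (by norm_num) _ ((hfirst (nxt d)).symm.trans (hφA _ hmem)))
      fun hmem ↦ nxt_ne (by norm_num) _ ((hφA' _ hmem).symm.trans (hfirst (nxt d)))

end Cyclic

/-! ### Edge cycles -/

namespace IsSimpleEdgeCycleVia

variable {P γ e : Set E3} {n : ℕ} {v : Fin n → E3} {i j : Fin n} {x : E3}

theorem three_le (h : IsSimpleEdgeCycleVia P γ v) : 3 ≤ n := h.1

theorem injective (h : IsSimpleEdgeCycleVia P γ v) : Function.Injective v := h.2.1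

theorem isVertexOf (h : IsSimpleEdgeCycleVia P γ v) (i : Fin n) : IsVertexOf (v i) P := h.2.2.1 i

theorem isEdgeOf (h : IsSimpleEdgeCycleVia P γ v) (i : Fin n) :
    IsEdgeOf (segment ℝ (v i) (v (nxt i))) P := h.2.2.2.1 i

theorem mem_iff (h : IsSimpleEdgeCycleVia P γ v) :
    x ∈ γ ↔ ∃ i, x ∈ segment ℝ (v i) (v (nxt i)) := by
  rw [h.2.2.2.2, mem_iUnion]

theorem segment_subset (h : IsSimpleEdgeCycleVia P γ v) (i : Fin n) :
    segment ℝ (v i) (v (nxt i)) ⊆ γ := fun _ hx ↦ h.mem_iff.2 ⟨i, hx⟩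

theorem vertex_mem (h : IsSimpleEdgeCycleVia P γ v) (i : Fin n) : v i ∈ γ :=
  h.segment_subset i (left_mem_segment ..)

theorem ne_nxt (h : IsSimpleEdgeCycleVia P γ v) (i : Fin n) : v i ≠ v (nxt i) :=
  h.injective.ne (nxt_ne (by have := h.three_le; omega) i).symm

theorem eq_or_eq_of_mem_segment (h : IsSimpleEdgeCycleVia P γ v)
    (hj : v j ∈ segment ℝ (v i) (v (nxt i))) : j = i ∨ j = nxt i :=
  ((h.isVertexOf j).eq_or_eq_of_mem_segment (h.isVertexOf i).mem (h.isVertexOf _).mem hj).imp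
    (h.injective ·) (h.injective ·)

theorem segment_injective (h : IsSimpleEdgeCycleVia P γ v) :
    Function.Injective fun i ↦ segment ℝ (v i) (v (nxt i)) := by
  intro i j (hij : segment ℝ (v i) (v (nxt i)) = segment ℝ (v j) (v (nxt j)))
  rcases h.eq_or_eq_of_mem_segment (hij ▸ left_mem_segment ℝ (v i) _) with rfl | rfl
  · rfl
  rcases h.eq_or_eq_of_mem_segment (hij ▸ right_mem_segment ℝ (v (nxt j)) _) with hj | hj
  · exact absurd hj (nxt_nxt_ne h.three_le j)
  · exact nxt_injective hj

theorem exists_eq_segment (h : IsSimpleEdgeCycleVia P γ v) (he : IsEdgeOf e P) (heγ : e ⊆ γ) :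
    ∃ i, e = segment ℝ (v i) (v (nxt i)) := by
  by_contra! hne
  have hcover : e ⊆ ⋃ i, e ∩ segment ℝ (v i) (v (nxt i)) := fun x hx ↦
    have ⟨i, hi⟩ := h.mem_iff.1 (heγ hx)
    mem_iUnion.2 ⟨i, hx, hi⟩
  exact he.infinite <|
    (finite_iUnion fun i ↦ (he.inter_subsingleton (h.isEdgeOf i) (hne i)).finite).subset hcover

theorem exists_eq_vertex (h : IsSimpleEdgeCycleVia P γ v) (hx : IsVertexOf x P) (hxγ : x ∈ γ) :
    ∃ i, x = v (nxt i) := by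
  obtain ⟨i, hi⟩ := h.mem_iff.1 hxγ
  rcases hx.eq_or_eq_of_mem_segment (h.isVertexOf i).mem (h.isVertexOf _).mem hi with hx | hx
  · obtain ⟨j, rfl⟩ := nxt_surjective i
    exact ⟨j, hx⟩
  · exact ⟨i, hx⟩

end IsSimpleEdgeCycleVia

/-! ### Polygonal facets -/

section Polygon

variable {P K γ e : Set E3} {n : ℕ} {v : Fin n → E3} {a b w x : E3}

theorem IsEdgeOf.exists_exposing_functional (he : IsEdgeOf e P) (hK : IsFacetOf K P)
    (heK : e ⊆ K) :
    ∃ (f : E3 →ₗ[ℝ] ℝ) (c : ℝ), (∀ y ∈ K, f y ≤ c) ∧ ∀ y ∈ K, f y = c ↔ y ∈ e :=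
  exists_exposing_functional_of_isExtreme hK.1.convex he.1.convex he.1.1
    (he.1.2.2.2.mono hK.1.subset heK) (hK.2.trans (congrArg (· + 1) he.2).symm)

theorem IsEdgeOf.notMem_segment_of_ne (ha : IsEdgeOf (segment ℝ w a) P)
    (hb : IsEdgeOf (segment ℝ w b) P) (hab : segment ℝ w a ≠ segment ℝ w b) :
    b ∉ segment ℝ w a := fun hmem ↦
  hab (hb.1.eq_of_subset_of_setDim_le ha.1
    (ha.1.convex.segment_subset (left_mem_segment ..) hmem) (ha.2.trans hb.2.symm).le).symm

theorem IsFacetOf.exists_supporting_functional (hK : IsFacetOf K P)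
    (ha : IsEdgeOf (segment ℝ w a) P) (hb : IsEdgeOf (segment ℝ w b) P)
    (hab : segment ℝ w a ≠ segment ℝ w b) (haK : segment ℝ w a ⊆ K) (hbK : segment ℝ w b ⊆ K) :
    ∃ f : E3 →ₗ[ℝ] ℝ, f (a - w) = 0 ∧ f (b - w) < 0 ∧ ∀ y ∈ K, f (y - w) ≤ 0 := by
  obtain ⟨f, c, hf, hfa⟩ := ha.exists_exposing_functional hK haK
  have haw : f a = c := (hfa a (haK (right_mem_segment ..))).2 (right_mem_segment ..)
  have hw : f w = c := (hfa w (haK (left_mem_segment ..))).2 (left_mem_segment ..)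
  have hbK' : b ∈ K := hbK (right_mem_segment ..)
  have hfb : f b < c :=
    (hf b hbK').lt_of_ne fun h ↦ ha.notMem_segment_of_ne hb hab ((hfa b hbK').1 h)
  refine ⟨f, ?_, ?_, fun y hy ↦ ?_⟩
  · rw [map_sub, haw, hw, sub_self]
  · rwa [map_sub, hw, sub_neg]
  · rw [map_sub, hw, sub_nonpos]
    exact hf y hy

theorem linearIndependent_pair_of_dual {R M : Type*} [CommRing R] [NoZeroDivisors R]
    [AddCommGroup M] [Module R M] {f g : M →ₗ[R] R} {u v : M}
    (hfu : f u = 0) (hfv : f v ≠ 0) (hgv : g v = 0) (hgu : g u ≠ 0) :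
    LinearIndependent R ![u, v] := by
  refine LinearIndependent.pair_iff.2 fun s t hst ↦ ?_
  have hf := congrArg f hst
  have hg := congrArg g hst
  simp only [map_add, map_smul, map_zero, smul_eq_mul, hfu, hgv, mul_zero, zero_add, add_zero,
    mul_eq_zero, hfv, hgu, or_false] at hf hg
  exact ⟨hg, hf⟩

theorem IsFacetOf.exists_cone_coords (hK : IsFacetOf K P) (ha : IsEdgeOf (segment ℝ w a) P)
    (hb : IsEdgeOf (segment ℝ w b) P) (hab : segment ℝ w a ≠ segment ℝ w b)
    (haK : segment ℝ w a ⊆ K) (hbK : segment ℝ w b ⊆ K) (hx : x ∈ K) :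
    ∃ α β : ℝ, 0 ≤ α ∧ 0 ≤ β ∧ x = w + α • (a - w) + β • (b - w) := by
  obtain ⟨f, hfa, hfb, hf⟩ := hK.exists_supporting_functional ha hb hab haK hbK
  obtain ⟨g, hgb, hga, hg⟩ := hK.exists_supporting_functional hb ha hab.symm hbK haK
  have hwK : w ∈ K := haK (left_mem_segment ..)
  have hindep := linearIndependent_pair_of_dual hfa hfb.ne hgb hga.ne
  have hspan : Submodule.span ℝ (range ![a - w, b - w]) = vectorSpan ℝ K := by
    refine Submodule.eq_of_le_of_finrank_eq (Submodule.span_le.2 ?_)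
      ((finrank_span_eq_card hindep).trans hK.2.symm)
    rintro _ ⟨i, rfl⟩
    fin_cases i
    exacts [vsub_mem_vectorSpan ℝ (haK (right_mem_segment ..)) hwK,
      vsub_mem_vectorSpan ℝ (hbK (right_mem_segment ..)) hwK]
  have hxw : x - w ∈ Submodule.span ℝ (range ![a - w, b - w]) :=
    hspan ▸ vsub_mem_vectorSpan ℝ hx hwK
  rw [Matrix.range_cons_cons_empty, Submodule.mem_span_pair] at hxw
  obtain ⟨α, β, hαβ⟩ := hxw
  have hfx := hf x hx
  have hgx := hg x hx
  simp only [← hαβ, map_add, map_smul, hfa, hgb, smul_eq_mul, mul_zero, zero_add, add_zero]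
    at hfx hgx
  exact ⟨α, β, nonneg_of_mul_nonpos_left hgx hga, nonneg_of_mul_nonpos_left hfx hfb,
    by rw [add_assoc, hαβ, add_sub_cancel]⟩

namespace IsSimpleEdgeCycleVia

theorem exists_cone_coords (h : IsSimpleEdgeCycleVia P γ v) (hK : IsFacetOf K P) (hγK : γ ⊆ K)
    (i : Fin n) (hx : x ∈ K) : ∃ α β : ℝ, 0 ≤ α ∧ 0 ≤ β ∧
      x = v (nxt i) + α • (v (nxt (nxt i)) - v (nxt i)) + β • (v i - v (nxt i)) := by
  have hsymm := segment_symm ℝ (v (nxt i)) (v i)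
  refine hK.exists_cone_coords (h.isEdgeOf _) (hsymm ▸ h.isEdgeOf i) (hsymm ▸ fun heq ↦ ?_)
    ((h.segment_subset _).trans hγK) (hsymm ▸ (h.segment_subset i).trans hγK) hx
  exact nxt_ne (by have := h.three_le; omega) i (h.segment_injective heq)

theorem exists_maximizer (h : IsSimpleEdgeCycleVia P γ v) (hK : IsFacetOf K P) (hγK : γ ⊆ K)
    (f : E3 →ₗ[ℝ] ℝ) : ∃ i, ∀ x ∈ K, f x ≤ f (v (nxt i)) := by
  have : Nonempty (Fin n) := ⟨⟨0, by have := h.three_le; omega⟩⟩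
  obtain ⟨j, hj⟩ := Finite.exists_max fun i ↦ f (v i)
  obtain ⟨i, rfl⟩ := nxt_surjective j
  refine ⟨i, fun x hx ↦ ?_⟩
  obtain ⟨α, β, hα, hβ, rfl⟩ := h.exists_cone_coords hK hγK i hx
  simp only [map_add, map_smul, map_sub, smul_eq_mul]
  nlinarith [hj i, hj (nxt (nxt i))]

-- A functional exposing `e` on `K` is maximal at a vertex of `γ`, and the cone coordinates at that
-- vertex force one of the two neighbouring vertices of `γ` to be maximal as well.
theorem exists_eq_segment_of_subset_facet (h : IsSimpleEdgeCycleVia P γ v) (hK : IsFacetOf K P)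
    (hγK : γ ⊆ K) (he : IsEdgeOf e P) (heK : e ⊆ K) :
    ∃ i, e = segment ℝ (v i) (v (nxt i)) := by
  obtain ⟨f, c, hf, hfe⟩ := he.exists_exposing_functional hK heK
  obtain ⟨i, hi⟩ := h.exists_maximizer hK hγK f
  have hvK (j) : v j ∈ K := hγK (h.vertex_mem j)
  obtain ⟨m, hm⟩ := he.1.1
  have hfi : f (v (nxt i)) = c :=
    (hf _ (hvK _)).antisymm (((hfe m (heK hm)).2 hm).symm.trans_le (hi m (heK hm)))
  have hie : v (nxt i) ∈ e := (hfe _ (hvK _)).1 hfi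
  obtain ⟨x, hxe, hxi⟩ := he.infinite.exists_notMem_finite (finite_singleton (v (nxt i)))
  have hneighbour : v (nxt (nxt i)) ∈ e ∨ v i ∈ e := by
    obtain ⟨α, β, hα, hβ, hx⟩ := h.exists_cone_coords hK hγK i (heK hxe)
    have hfx := (hfe x (heK hxe)).2 hxe
    by_contra! hout
    have ha := (hf _ (hvK (nxt (nxt i)))).lt_of_ne (hout.1 ∘ (hfe _ (hvK _)).1)
    have hb := (hf _ (hvK i)).lt_of_ne (hout.2 ∘ (hfe _ (hvK _)).1)
    simp only [hx, map_add, map_smul, map_sub, smul_eq_mul, hfi] at hfx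
    have hα0 : α = 0 := by nlinarith
    have hβ0 : β = 0 := by nlinarith
    exact hxi (by simp [hx, hα0, hβ0])
  rcases hneighbour with hnext | hprev
  · exact ⟨nxt i, he.eq_segment (h.isVertexOf _) (h.isVertexOf _) (h.ne_nxt _) hie hnext⟩
  · exact ⟨i, he.eq_segment (h.isVertexOf _) (h.isVertexOf _) (h.ne_nxt _) hprev hie⟩

theorem facetEdges_eq (h : IsSimpleEdgeCycleVia P γ v) (hK : IsFacetOf K P) (hγK : γ ⊆ K) :
    facetEdges P K = n := by
  have hedges : {e | IsEdgeOf e P ∧ e ⊆ K} = range fun i ↦ segment ℝ (v i) (v (nxt i)) := by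
    ext e
    constructor
    · rintro ⟨he, heK⟩
      obtain ⟨i, hi⟩ := h.exists_eq_segment_of_subset_facet hK hγK he heK
      exact ⟨i, hi.symm⟩
    · rintro ⟨i, rfl⟩
      exact ⟨h.isEdgeOf i, (h.segment_subset i).trans hγK⟩
  rw [facetEdges, hedges, ← image_univ, ncard_image_of_injective _ h.segment_injective,
    ncard_univ, Nat.card_fin]

end IsSimpleEdgeCycleVia

end Polygon

/-! ### Loops traversed along an edge cycle -/

section Loops

variable {P γ e e' : Set E3} {k l n m : ℕ} {x : E3}

theorem IsLoop.isFacetOf {L : Fin k → Set E3} (hL : IsLoop P L) (i : Fin k) :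
    IsFacetOf (L i) P := hL.2.1 i

theorem IsLoop.ne_nxt {L : Fin k → Set E3} (hL : IsLoop P L) (hk : 2 ≤ k) (i : Fin k) :
    L i ≠ L (nxt i) := by
  intro h
  have hdim := (hL.2.2 hk i).2
  rw [← h, inter_self, (hL.isFacetOf i).2] at hdim
  omega

theorem IsBelt.injective {B : Fin k → Set E3} (hB : IsBelt P B) (hk : 4 ≤ k) :
    Function.Injective B := by
  intro p q hpq
  by_contra hne
  have hinter : (B p ∩ B q).Nonempty := by
    rw [← hpq, inter_self]
    exact (hB.2.1.isFacetOf p).1.1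
  rcases (hB.2.2.2 hk p q hne).1 hinter with rfl | rfl
  · exact hB.2.1.ne_nxt (by omega) p hpq
  · exact hB.2.1.ne_nxt (by omega) q hpq.symm

theorem nonempty_inter_of_no_three_belt (h3 : ∀ T : Fin 3 → Set E3, ¬ IsBelt P T)
    {F G H : Set E3} (hF : IsFacetOf F P) (hG : IsFacetOf G P) (hH : IsFacetOf H P)
    (hFG : IsEdgeOf (F ∩ G) P) (hGH : IsEdgeOf (G ∩ H) P) (hHF : IsEdgeOf (H ∩ F) P) :
    (F ∩ G ∩ H).Nonempty := by
  by_contra! hempty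
  have hcyc : G ∩ H ∩ F = ∅ := by rwa [inter_comm, ← inter_assoc]
  have hcyc' : H ∩ F ∩ G = ∅ := by rwa [inter_assoc, inter_comm]
  refine h3 ![F, G, H] ⟨le_rfl, ⟨by norm_num, fun i ↦ ?_, fun _ i ↦ ?_⟩, fun _ i ↦ ?_, by norm_num⟩
  all_goals fin_cases i <;> assumption

/-- The facets of `P` containing the point `x`. -/
def facetsAt (P : Set E3) (x : E3) : Set (Set E3) := {F | IsFacetOf F P ∧ x ∈ F}

theorem IsSimplePolytope3.facetsAt_eq (hP : IsSimplePolytope3 P) (hx : IsVertexOf x P)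
    {F G H : Set E3} (hF : F ∈ facetsAt P x) (hG : G ∈ facetsAt P x) (hH : H ∈ facetsAt P x)
    (hFG : F ≠ G) (hFH : F ≠ H) (hGH : G ≠ H) : facetsAt P x = {F, G, H} := by
  have hcard : (facetsAt P x).ncard = 3 := hP.2.2 x hx
  refine (eq_of_subset_of_ncard_le (by simp [insert_subset_iff, hF, hG, hH]) ?_
    (finite_of_ncard_pos (by omega))).symm
  rw [hcard, ncard_eq_three.2 ⟨F, G, H, hFG, hFH, hGH, rfl⟩]

/-- The loop `L` is traversed along the edge cycle `γ` with vertices `v`: the `i`-th edge of `γ`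
lies in `L (φ i)`, and `last c` is the last edge of `γ` on the arc along `L c`. -/
structure IsTraversal (P γ : Set E3) (L : Fin k → Set E3) (v : Fin n → E3) (φ : Fin n → Fin k)
    (last : Fin k → Fin n) : Prop where
  two_le : 2 ≤ k
  loop : IsLoop P L
  cycle : IsSimpleEdgeCycleVia P γ v
  edge_subset : ∀ i, segment ℝ (v i) (v (nxt i)) ⊆ L (φ i)
  turn : IsTurn φ last

theorem WalksRound.exists_isTraversal {C : Set E3} {L : Fin k → Set E3} (hk : 2 ≤ k)
    (h : WalksRound P γ C L) :
    ∃ (n : ℕ) (v : Fin n → E3) (φ : Fin n → Fin k) (last : Fin k → Fin n),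
      IsTraversal P γ L v φ last := by
  obtain ⟨hL, -, n, v, φ, hv, hsub, hstep, hsurj, hcard⟩ := h
  obtain ⟨last, hturn⟩ := exists_isTurn hk hstep hsurj (hcard hk)
  exact ⟨n, v, φ, last, hk, hL, hv, hsub, hturn⟩

theorem IsCompOf.disjoint {A C D : Set E3} (hC : IsCompOf C A) (hD : IsCompOf D A) (hne : C ≠ D) :
    Disjoint C D := by
  obtain ⟨x, -, rfl⟩ := hC
  obtain ⟨y, -, rfl⟩ := hD
  exact disjoint_left.2 fun z hzx hzy ↦
    hne ((connectedComponentIn_eq hzx).trans (connectedComponentIn_eq hzy).symm)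

theorem WalksRound.ne {C D : Set E3} {L : Fin k → Set E3} {M : Fin l → Set E3}
    (hL : WalksRound P γ C L) (hM : WalksRound P γ D M) (hCD : Disjoint C D) (i : Fin k)
    (j : Fin l) : L i ≠ M j := by
  intro h
  have hF := (hL.1.isFacetOf i).1
  obtain ⟨z, hz⟩ := (intrinsicInterior_nonempty hF.convex).2 hF.1
  exact disjoint_left.1 hCD (hL.2.1 i hz) (hM.2.1 j (h ▸ hz))

/-- The loops `B` and `L` are traversed along the two sides of the edge cycle `γ`. Of the two
sides only this is kept: no facet belongs to both loops. -/
structure IsBorderTraversal (P γ : Set E3) (B : Fin k → Set E3) (v : Fin n → E3)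
    (φ : Fin n → Fin k) (σ : Fin k → Fin n) (L : Fin l → Set E3) (w : Fin m → E3)
    (ψ : Fin m → Fin l) (τ : Fin l → Fin m) : Prop where
  left : IsTraversal P γ B v φ σ
  right : IsTraversal P γ L w ψ τ
  ne : ∀ b d, B b ≠ L d

theorem Borders.exists_isBorderTraversal {B : Fin k → Set E3} {L : Fin l → Set E3} (hk : 2 ≤ k)
    (hl : 2 ≤ l) (h : Borders P B L) :
    ∃ (γ : Set E3) (n m : ℕ) (v : Fin n → E3) (w : Fin m → E3) (φ : Fin n → Fin k)
      (ψ : Fin m → Fin l) (σ : Fin k → Fin n) (τ : Fin l → Fin m),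
      IsBorderTraversal P γ B v φ σ L w ψ τ := by
  obtain ⟨γ, C, D, hC, hD, hCD, hB, hL⟩ := h
  obtain ⟨n, v, φ, σ, hv⟩ := hB.exists_isTraversal hk
  obtain ⟨m, w, ψ, τ, hw⟩ := hL.exists_isTraversal hl
  exact ⟨γ, n, m, v, w, φ, ψ, σ, τ, hv, hw, hB.ne hL (hC.disjoint hD hCD)⟩

namespace IsTraversal

variable {L : Fin l → Set E3} {w : Fin m → E3} {ψ : Fin m → Fin l} {τ : Fin l → Fin m}
  {i j : Fin m} {F G : Set E3}

theorem ne_nxt (hL : IsTraversal P γ L w ψ τ) (d : Fin l) : L d ≠ L (nxt d) :=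
  hL.loop.ne_nxt hL.two_le d

theorem edge_subset_of_eq (hL : IsTraversal P γ L w ψ τ) {d : Fin l} (hi : ψ i = d) :
    segment ℝ (w i) (w (nxt i)) ⊆ L d := hi ▸ hL.edge_subset i

theorem exists_edge_subset (hL : IsTraversal P γ L w ψ τ) (he : IsEdgeOf e P) (heγ : e ⊆ γ) :
    ∃ d, e ⊆ L d := by
  obtain ⟨i, rfl⟩ := hL.cycle.exists_eq_segment he heγ
  exact ⟨ψ i, hL.edge_subset i⟩

theorem eq_of_edges_subset (hL : IsTraversal P γ L w ψ τ) (hF : IsFacetOf F P)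
    (hG : IsFacetOf G P) (hFG : F ≠ G) (hiF : segment ℝ (w i) (w (nxt i)) ⊆ F)
    (hiG : segment ℝ (w i) (w (nxt i)) ⊆ G) (hjF : segment ℝ (w j) (w (nxt j)) ⊆ F)
    (hjG : segment ℝ (w j) (w (nxt j)) ⊆ G) : i = j :=
  hL.cycle.segment_injective <| (hL.cycle.isEdgeOf i).eq_of_subset_facets (hL.cycle.isEdgeOf j)
    hF hG hFG hiF hiG hjF hjG

theorem eq_iff_eq_last (hL : IsTraversal P γ L w ψ τ) (hP : IsSimplePolytope3 P)
    (hF : IsFacetOf F P) (hG : IsFacetOf G P) (hFL : ∀ d, F ≠ L d) (hGL : ∀ d, G ≠ L d)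
    (hjF : segment ℝ (w j) (w (nxt j)) ⊆ F)
    (hjG : segment ℝ (w (nxt j)) (w (nxt (nxt j))) ⊆ G) : F = G ↔ j = τ (ψ j) := by
  constructor
  · rintro rfl
    refine hL.turn.last_eq_of_apply_nxt_ne fun hψ ↦ ?_
    refine nxt_ne (by have := hL.cycle.three_le; omega) j ?_
    exact (hL.eq_of_edges_subset hF (hL.loop.isFacetOf _) (hFL (ψ j)) hjF (hL.edge_subset j) hjG
      (hL.edge_subset_of_eq hψ)).symm
  · intro hj
    have hψ : ψ (nxt j) = nxt (ψ j) := by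
      conv_lhs => rw [hj]
      exact hL.turn.apply_nxt_last _
    by_contra hFG
    have hG' : G ∈ facetsAt P (w (nxt j)) := ⟨hG, hjG (left_mem_segment ..)⟩
    rw [hP.facetsAt_eq (hL.cycle.isVertexOf _)
      ⟨hL.loop.isFacetOf (ψ j), hL.edge_subset j (right_mem_segment ..)⟩
      ⟨hL.loop.isFacetOf (nxt (ψ j)), hL.edge_subset_of_eq hψ (left_mem_segment ..)⟩
      ⟨hF, hjF (right_mem_segment ..)⟩ (hL.ne_nxt _) (hFL _).symm (hFL _).symm] at hG'
    rcases hG' with h | h | h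
    exacts [hGL _ h, hGL _ h, hFG h.symm]

end IsTraversal

end Loops

/-! ### Repeated facets in a bordering loop -/

section Bordering

variable {P γ : Set E3} {k l n m : ℕ} {B : Fin k → Set E3} {v : Fin n → E3} {φ : Fin n → Fin k}
  {σ : Fin k → Fin n} {L : Fin l → Set E3} {w : Fin m → E3} {ψ : Fin m → Fin l}
  {τ : Fin l → Fin m} {d : Fin l}

theorem IsTraversal.last_injective (hL : IsTraversal P γ L w ψ τ) : Function.Injective τ :=
  Function.LeftInverse.injective hL.turn.apply_last

theorem IsTraversal.inter_nxt_eq_segment (hL : IsTraversal P γ L w ψ τ)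
    (hd : L d = L (nxt (nxt d))) :
    L d ∩ L (nxt d) = segment ℝ (w (nxt (τ d))) (w (nxt (τ (nxt d)))) := by
  have hstart : w (nxt (τ d)) ∈ L (nxt d) :=
    hL.edge_subset_of_eq (hL.turn.apply_nxt_last d) (left_mem_segment ..)
  have hend : w (nxt (τ (nxt d))) ∈ L d :=
    hd ▸ hL.edge_subset_of_eq (hL.turn.apply_nxt_last (nxt d)) (left_mem_segment ..)
  refine (hL.loop.2.2 hL.two_le d).eq_segment (hL.cycle.isVertexOf _) (hL.cycle.isVertexOf _)
    (hL.cycle.injective.ne (nxt_injective.ne (hL.last_injective.ne (nxt_ne hL.two_le d).symm)))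
    ⟨?_, hstart⟩ ⟨hend, ?_⟩
  · exact hL.edge_subset_of_eq (hL.turn.apply_last d) (right_mem_segment ..)
  · exact hL.edge_subset_of_eq (hL.turn.apply_last (nxt d)) (right_mem_segment ..)

theorem IsFacetOf.facetEdges_eq_of_polygon {K : Set E3} (hK : IsFacetOf K P) (hn : 3 ≤ n)
    (hinj : Function.Injective v) (hvert : ∀ i, IsVertexOf (v i) P)
    (hedge : ∀ i, IsEdgeOf (segment ℝ (v i) (v (nxt i))) P ∧
      segment ℝ (v i) (v (nxt i)) ⊆ K) : facetEdges P K = n :=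
  IsSimpleEdgeCycleVia.facetEdges_eq ⟨hn, hinj, hvert, fun i ↦ (hedge i).1, rfl⟩ hK
    (iUnion_subset fun i ↦ (hedge i).2)

theorem IsTraversal.facetEdges_eq_four_of_arc (hL : IsTraversal P γ L w ψ τ)
    (hd : L d = L (nxt (nxt d))) (harc : nxt (nxt (nxt (τ d))) = τ (nxt d)) :
    facetEdges P (L (nxt d)) = 4 := by
  set p := nxt (τ d)
  have hψ : ψ p = nxt d := hL.turn.apply_nxt_last d
  have hψ₁ : ψ (nxt p) = nxt d :=
    hL.turn.apply_nxt_of_ne hψ (harc ▸ (nxt_nxt_ne hL.cycle.three_le p).symm)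
  have hψ₂ : ψ (nxt (nxt p)) = nxt d := harc ▸ hL.turn.apply_last (nxt d)
  have hclose : nxt (nxt (nxt p)) ≠ p := fun heq ↦ nxt_ne hL.two_le d <|
    hL.last_injective (nxt_injective (harc ▸ heq))
  have hchord : L d ∩ L (nxt d) = segment ℝ (w (nxt (nxt (nxt p)))) (w p) := by
    rw [harc, segment_symm, hL.inter_nxt_eq_segment hd]
  refine (hL.loop.isFacetOf _).facetEdges_eq_of_polygon
    (v := w ∘ ![p, nxt p, nxt (nxt p), nxt (nxt (nxt p))]) (by norm_num)
    (hL.cycle.injective.comp (injective_vec_nxt hL.cycle.three_le hclose))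
    (fun i ↦ hL.cycle.isVertexOf _) fun i ↦ ?_
  fin_cases i
  exacts [⟨hL.cycle.isEdgeOf _, hL.edge_subset_of_eq hψ⟩,
    ⟨hL.cycle.isEdgeOf _, hL.edge_subset_of_eq hψ₁⟩,
    ⟨hL.cycle.isEdgeOf _, hL.edge_subset_of_eq hψ₂⟩,
    ⟨hchord ▸ hL.loop.2.2 hL.two_le d, hchord.ge.trans inter_subset_right⟩]

namespace IsBorderTraversal

theorem exists_eq_corner (h : IsBorderTraversal P γ B v φ σ L w ψ τ) (hP : IsSimplePolytope3 P)
    (hinj : Function.Injective B) {x : E3} (hx : IsVertexOf x P) (hxγ : x ∈ γ) {b b' : Fin k}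
    (hb : x ∈ B b) (hb' : x ∈ B b') (hbb' : b ≠ b') :
    ∃ a, x = v (nxt (σ a)) ∧ s(b, b') = s(a, nxt a) := by
  have hB := h.left
  obtain ⟨i, rfl⟩ := hB.cycle.exists_eq_vertex hx hxγ
  obtain ⟨d, hd⟩ := h.right.exists_edge_subset (hB.cycle.isEdgeOf i) (hB.cycle.segment_subset i)
  obtain ⟨d', hd'⟩ := h.right.exists_edge_subset (hB.cycle.isEdgeOf (nxt i))
    (hB.cycle.segment_subset (nxt i))
  have hBx {a} (ha : v (nxt i) ∈ B a) : B a ∈ facetsAt P (v (nxt i)) := ⟨hB.loop.isFacetOf a, ha⟩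
  have hLx : L d ∈ facetsAt P (v (nxt i)) :=
    ⟨h.right.loop.isFacetOf d, hd (right_mem_segment ..)⟩
  by_cases hi : i = σ (φ i)
  · have hφ : φ (nxt i) = nxt (φ i) := by
      conv_lhs => rw [hi]
      exact hB.turn.apply_nxt_last _
    have hall := hP.facetsAt_eq hx (hBx (hB.edge_subset i (right_mem_segment ..)))
      (hBx (hB.edge_subset_of_eq hφ (left_mem_segment ..))) hLx (hB.ne_nxt _) (h.ne _ _) (h.ne _ _)
    have hmem {a} (ha : v (nxt i) ∈ B a) : a = φ i ∨ a = nxt (φ i) := by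
      simpa [hinj.eq_iff, h.ne] using hall.subset (hBx ha)
    refine ⟨φ i, congrArg (v ∘ nxt) hi, ?_⟩
    rcases hmem hb with rfl | rfl <;> rcases hmem hb' with rfl | rfl
    exacts [absurd rfl hbb', rfl, Sym2.eq_swap, absurd rfl hbb']
  · have hdd' : L d ≠ L d' := fun heq ↦ hi <|
      (hB.eq_iff_eq_last hP (h.right.loop.isFacetOf d) (h.right.loop.isFacetOf d')
        (fun a ↦ (h.ne a d).symm) (fun a ↦ (h.ne a d').symm) hd hd').1 heq
    have hLx' : L d' ∈ facetsAt P (v (nxt i)) :=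
      ⟨h.right.loop.isFacetOf d', hd' (left_mem_segment ..)⟩
    rw [hP.facetsAt_eq hx (hBx hb) (hBx hb') hLx (hinj.ne hbb') (h.ne _ _) (h.ne _ _)] at hLx'
    simp [(h.ne _ _).symm, hdd'.symm] at hLx'

theorem card_filter_ne_last_le (h : IsBorderTraversal P γ B v φ σ L w ψ τ)
    (hP : IsSimplePolytope3 P) (hinj : Function.Injective B) :
    (Finset.univ.filter fun j ↦ j ≠ τ (ψ j)).card ≤ k := by
  have hcorner (j) (hj : j ≠ τ (ψ j)) : ∃ a, w (nxt j) = v (nxt (σ a)) := by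
    have hL := h.right
    obtain ⟨b, hb⟩ := h.left.exists_edge_subset (hL.cycle.isEdgeOf j) (hL.cycle.segment_subset j)
    obtain ⟨b', hb'⟩ := h.left.exists_edge_subset (hL.cycle.isEdgeOf (nxt j))
      (hL.cycle.segment_subset (nxt j))
    have hne : B b ≠ B b' := fun heq ↦ hj <|
      (hL.eq_iff_eq_last hP (h.left.loop.isFacetOf b) (h.left.loop.isFacetOf b') (h.ne b) (h.ne b')
        hb hb').1 heq
    obtain ⟨a, ha, -⟩ := h.exists_eq_corner hP hinj (hL.cycle.isVertexOf _)
      (hL.cycle.vertex_mem _) (hb (right_mem_segment ..)) (hb' (left_mem_segment ..))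
      (ne_of_apply_ne B hne)
    exact ⟨a, ha⟩
  refine (Finset.card_le_card_of_forall_subsingleton (t := Finset.univ)
    (fun j a ↦ w (nxt j) = v (nxt (σ a))) (fun j hj ↦ ?_) fun a _ j hj j' hj' ↦ ?_).trans_eq
    (Finset.card_fin k)
  · simpa using hcorner j (Finset.mem_filter.1 hj).2
  · exact nxt_injective (h.right.cycle.injective (hj.2.trans hj'.2.symm))

theorem mem_of_edges_subset (h : IsBorderTraversal P γ B v φ σ L w ψ τ)
    (hP : IsSimplePolytope3 P) (h3 : ∀ T : Fin 3 → Set E3, ¬ IsBelt P T)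
    (hinj : Function.Injective B) (hk : 3 ≤ k) {x : E3} {F e e' : Set E3} {b b' : Fin k}
    (hx : IsVertexOf x P) (hxγ : x ∈ γ) (hb : x ∈ B b) (hb' : x ∈ B b') (hbb' : b ≠ b')
    (hF : IsFacetOf F P) (hFB : ∀ a, B a ≠ F) (he : IsEdgeOf e P) (he' : IsEdgeOf e' P)
    (hee' : e ≠ e') (heγ : e ⊆ γ) (heF : e ⊆ F) (heF' : e' ⊆ F) (heB : e ⊆ B b)
    (heB' : e' ⊆ B b') : x ∈ F := by
  have hloop := h.left.loop
  obtain ⟨a, rfl, hba⟩ := h.exists_eq_corner hP hinj hx hxγ hb hb' hbb'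
  have hBB : IsEdgeOf (B b ∩ B b') P := by
    have hedge := hloop.2.2 h.left.two_le a
    rcases Sym2.eq_iff.1 hba with ⟨hb, hb'⟩ | ⟨hb, hb'⟩
    · rwa [hb, hb']
    · rwa [hb, hb', inter_comm]
  have hFb : F ∩ B b = e :=
    hF.inter_eq_of_edge_subset (hloop.isFacetOf b) (hFB b).symm he heF heB
  have hFb' : B b' ∩ F = e' :=
    (hloop.isFacetOf b').inter_eq_of_edge_subset hF (hFB b') he' heB' heF'
  obtain ⟨y, ⟨hyF, hyb⟩, hyb'⟩ := nonempty_inter_of_no_three_belt h3 hF (hloop.isFacetOf b)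
    (hloop.isFacetOf b') (hFb ▸ he) hBB (hFb' ▸ he')
  have hye : y ∈ e := hFb ▸ ⟨hyF, hyb⟩
  have hy : IsVertexOf y P := he.isVertexOf he' hee' hye (hFb' ▸ ⟨hyb', hyF⟩)
  obtain ⟨a', rfl, hba'⟩ := h.exists_eq_corner hP hinj hy (heγ hye) hyb hyb' hbb'
  exact sym2_nxt_injective hk (hba.symm.trans hba') ▸ hyF

theorem nxt_last_ne_and_nxt_nxt_last_ne (h : IsBorderTraversal P γ B v φ σ L w ψ τ)
    (hP : IsSimplePolytope3 P) (h3 : ∀ T : Fin 3 → Set E3, ¬ IsBelt P T)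
    (hinj : Function.Injective B) (hk : 3 ≤ k) (hl : 3 ≤ l) (hd : L d = L (nxt (nxt d))) :
    nxt (τ d) ≠ τ (nxt d) ∧ nxt (nxt (τ d)) ≠ τ (nxt d) := by
  have hL := h.right
  have hedge := hL.cycle.isEdgeOf
  have hfacet := h.left.loop.isFacetOf
  choose b hb using fun j ↦ h.left.exists_edge_subset (hedge j) (hL.cycle.segment_subset j)
  have hturn (c) : b (τ c) = b (nxt (τ c)) := hinj <|
    (hL.eq_iff_eq_last hP (hfacet _) (hfacet _) (h.ne _) (h.ne _) (hb _) (hb _)).2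
      (congrArg τ (hL.turn.apply_last c)).symm
  have hfirst := hL.edge_subset_of_eq (hL.turn.apply_last d)
  have hlast := hd ▸ hL.edge_subset_of_eq (hL.turn.apply_nxt_last (nxt d))
  have hne : τ d ≠ nxt (τ (nxt d)) := fun heq ↦ nxt_nxt_ne hl d <| by
    rw [← hL.turn.apply_nxt_last (nxt d), ← heq, hL.turn.apply_last]
  have hbne : b (τ d) ≠ b (nxt (τ (nxt d))) := fun heq ↦ hne <|
    hL.eq_of_edges_subset (hL.loop.isFacetOf d) (hfacet _) (h.ne _ d).symm hfirst (hb _) hlast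
      (heq ▸ hb _)
  refine ⟨fun hq ↦ hbne ((hturn d).trans (hq ▸ hturn (nxt d))), fun hq ↦ ?_⟩
  set x := w (τ (nxt d)) with hxdef
  have hx : IsVertexOf x P := hL.cycle.isVertexOf _
  have hxB : x ∈ B (b (τ d)) := by
    rw [hturn, hxdef, ← hq]
    exact hb _ (right_mem_segment ..)
  have hxB' : x ∈ B (b (nxt (τ (nxt d)))) := hturn (nxt d) ▸ hb _ (left_mem_segment ..)
  have hxL : x ∈ L d := h.mem_of_edges_subset hP h3 hinj hk hx (hL.cycle.vertex_mem _) hxB hxB'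
    hbne (hL.loop.isFacetOf d) (fun a ↦ h.ne a d) (hedge _) (hedge _)
    (hL.cycle.segment_injective.ne hne) (hL.cycle.segment_subset _) hfirst hlast (hb _) (hb _)
  have hxL' : L (nxt d) ∈ facetsAt P x :=
    ⟨hL.loop.isFacetOf _, hL.edge_subset_of_eq (hL.turn.apply_last _) (left_mem_segment ..)⟩
  rw [hP.facetsAt_eq hx ⟨hfacet _, hxB⟩ ⟨hfacet _, hxB'⟩ ⟨hL.loop.isFacetOf d, hxL⟩
    (hinj.ne hbne) (h.ne _ _) (h.ne _ _)] at hxL'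
  simp [(h.ne _ _).symm, (hL.ne_nxt d).symm] at hxL'

end IsBorderTraversal

section Quadrangles

variable {L : Fin 4 → Set E3} {ψ : Fin m → Fin 4} {τ : Fin 4 → Fin m} {d : Fin 4}

theorem IsTraversal.facetEdges_eq_four_of_chords (hL : IsTraversal P γ L w ψ τ)
    (hd : L d = L (nxt (nxt d))) (harc : nxt (τ (nxt d)) = τ (nxt (nxt d)))
    (harc' : nxt (τ (nxt (nxt (nxt d)))) = τ d) : facetEdges P (L d) = 4 := by
  have hd' : L (nxt (nxt d)) = L (nxt (nxt (nxt (nxt d)))) := by rw [nxt_four, hd]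
  have hchord : segment ℝ (w (nxt (τ d))) (w (nxt (τ (nxt d)))) = L d ∩ L (nxt d) :=
    (hL.inter_nxt_eq_segment hd).symm
  have hchord' := (hL.inter_nxt_eq_segment hd').symm
  rw [← hd] at hchord'
  have hloop := hL.loop.2.2 hL.two_le
  refine (hL.loop.isFacetOf d).facetEdges_eq_of_polygon (v := fun a ↦ w (nxt (τ a)))
    (by norm_num) (hL.cycle.injective.comp (nxt_injective.comp hL.last_injective))
    (fun a ↦ hL.cycle.isVertexOf _) fun a ↦ ?_
  rcases eq_nxt_of_fin_four d a with rfl | rfl | rfl | rfl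
  · exact hchord ▸ ⟨hloop a, inter_subset_left⟩
  · rw [← harc]
    exact ⟨hL.cycle.isEdgeOf _, hd ▸ hL.edge_subset_of_eq (hL.turn.apply_nxt_last _)⟩
  · exact hchord' ▸ ⟨hd ▸ hloop _, inter_subset_left⟩
  · rw [nxt_four, harc']
    exact ⟨hL.cycle.isEdgeOf _, hL.edge_subset_of_eq (hL.turn.apply_last d)⟩

theorem IsBorderTraversal.arc_lengths {B : Fin 4 → Set E3} {φ : Fin n → Fin 4}
    {σ : Fin 4 → Fin n} (h : IsBorderTraversal P γ B v φ σ L w ψ τ) (hP : IsSimplePolytope3 P)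
    (h3 : ∀ T : Fin 3 → Set E3, ¬ IsBelt P T) (hinj : Function.Injective B)
    (hd : L d = L (nxt (nxt d))) :
    nxt (nxt (nxt (τ d))) = τ (nxt d) ∧ nxt (τ (nxt d)) = τ (nxt (nxt d)) := by
  refine h.right.turn.arc_lengths_of_card_le h.right.cycle.three_le
    (h.card_filter_ne_last_le hP hinj) ?_
  rintro e (rfl | rfl) <;>
    refine h.nxt_last_ne_and_nxt_nxt_last_ne hP h3 hinj (by norm_num) (by norm_num) ?_
  · exact hd
  · rw [nxt_four, hd]

theorem IsBorderTraversal.three_le_pVec {B : Fin 4 → Set E3} {φ : Fin n → Fin 4}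
    {σ : Fin 4 → Fin n} (h : IsBorderTraversal P γ B v φ σ L w ψ τ) (hP : IsSimplePolytope3 P)
    (h3 : ∀ T : Fin 3 → Set E3, ¬ IsBelt P T) (hinj : Function.Injective B)
    (hd : L d = L (nxt (nxt d))) : 3 ≤ pVec P 4 := by
  have hL := h.right
  have hd' : L (nxt (nxt d)) = L (nxt (nxt (nxt (nxt d)))) := by rw [nxt_four, hd]
  obtain ⟨harc, hedge⟩ := h.arc_lengths hP h3 hinj hd
  obtain ⟨harc', hedge'⟩ := h.arc_lengths hP h3 hinj hd'
  rw [nxt_four] at hedge'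
  have hne : L (nxt d) ≠ L (nxt (nxt (nxt d))) := fun heq ↦
    (h.nxt_last_ne_and_nxt_nxt_last_ne hP h3 hinj (by norm_num) (by norm_num) heq).1 hedge
  have hthree : ({L d, L (nxt d), L (nxt (nxt (nxt d)))} : Set (Set E3)).ncard = 3 :=
    ncard_eq_three.2 ⟨_, _, _, hL.ne_nxt d, hd ▸ hL.ne_nxt (nxt (nxt d)), hne, rfl⟩
  refine hthree ▸ ncard_le_ncard ?_ (hP.1.finite_faces.subset fun F hF ↦ hF.1.1)
  rintro F (rfl | rfl | rfl)
  exacts [⟨hL.loop.isFacetOf _, hL.facetEdges_eq_four_of_chords hd hedge hedge'⟩,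
    ⟨hL.loop.isFacetOf _, hL.facetEdges_eq_four_of_arc hd harc⟩,
    ⟨hL.loop.isFacetOf _, hL.facetEdges_eq_four_of_arc hd' harc'⟩]

end Quadrangles

end Bordering

theorem four_belt_borders_injective_general (P : Set E3) (hP : IsSimplePolytope3 P)
    (h3 : ∀ T : Fin 3 → Set E3, ¬ IsBelt P T) (h4 : pVec P 4 ≤ 2) (B L : Fin 4 → Set E3)
    (hB : Function.Injective B) (hbord : Borders P B L) : Function.Injective L := by
  obtain ⟨γ, n, m, v, w, φ, ψ, σ, τ, h⟩ :=
    hbord.exists_isBorderTraversal (by norm_num) (by norm_num)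
  intro i j hij
  rcases eq_nxt_of_fin_four i j with rfl | rfl | rfl | rfl
  · rfl
  · exact absurd hij (h.right.ne_nxt i)
  · have := h.three_le_pVec hP h3 hB hij
    omega
  · exact absurd ((congrArg L (nxt_four i)).trans hij).symm (h.right.ne_nxt _)

/-- In a flag 3-polytope with `p₄ ≤ 2`, if a 4-belt borders a 4-loop, then the four
facets of the 4-loop are pairwise different. -/
theorem four_belt_borders_injective (P : Set E3) (hP : IsFlag3Polytope P)
    (h4 : pVec P 4 ≤ 2) (B L : Fin 4 → Set E3) (hB : IsBelt P B) (hL : IsLoop P L)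
    (hbord : Borders P B L) :
    Function.Injective L :=
  four_belt_borders_injective_general P hP.1 hP.2.2 h4 B L (hB.injective le_rfl) hbord
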